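/- Assume F : S^{n×n} → ℝ is Lipschitz continuous with constant L > 0 with respect to the Frobenius norm, the interior of S_λ(A,b) is nonempty, and the n×(m+n−1) matrix [Aᵀ | Dₙᵀ] has full rank n. Let X* be a global minimizer of F over S_λ(A,b). Then there exists ε₀ > 0 such that for every ε ∈ [0,ε₀] the set S^ε := {X ∈ S^{n×n} : A λ(X) ≤ b and λ_{i+1}(X) ≤ λᵢ(X) − ε for i = 1,…,n−1} is nonempty, and for every global minimizer X*_ε of F over S^ε one has |F(X*) − F(X*_ε)| ≤ L · χ([Aᵀ|Dₙᵀ]) · √(n−1) · ε, where for a full-rank matrix Z ∈ ℝ^{n×(m+n−1)}, χ(Z) := max{ ‖Z_I^{-1}‖₂ : I ⊆ [m+n−1], |I| = n, Z_I nonsingular }, with Z_I the n×n submatrix of Z formed from the columns indexed by I and ‖·‖₂ the spectral norm. -/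

import Mathlib

open Matrix

/-- The vector of eigenvalues of a real symmetric matrix, in descending order
(junk value `0` if the matrix is not symmetric). -/
noncomputable def eigs {n : ℕ} (X : Matrix (Fin n) (Fin n) ℝ) : Fin n → ℝ :=
  if hX : X.IsHermitian then
    fun i => (hX.eigenvalues ∘ Tuple.sort hX.eigenvalues) i.rev
  else fun _ => 0

/-- The eigenvalue constraint set `S_λ(A,b) = {X ∈ S^{n×n} : A λ(X) ≤ b}`. -/
def SLambda {m n : ℕ} (A : Matrix (Fin m) (Fin n) ℝ) (b : Fin m → ℝ) :
    Set (Matrix (Fin n) (Fin n) ℝ) :=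
  {X | X.IsHermitian ∧ ∀ i, A.mulVec (eigs X) i ≤ b i}

/-- The Frobenius norm of a real matrix. -/
noncomputable def frobNorm {k l : Type*} [Fintype k] [Fintype l]
    (M : Matrix k l ℝ) : ℝ :=
  Real.sqrt (∑ i, ∑ j, (M i j) ^ 2)

/-- The spectral norm (ℓ₂ operator norm) of a real matrix. -/
noncomputable def specNorm {k l : Type*} [Fintype k] [Fintype l]
    (M : Matrix k l ℝ) : ℝ :=
  sSup {r | ∃ x : l → ℝ, Real.sqrt (∑ j, (x j) ^ 2) ≤ 1 ∧
    r = Real.sqrt (∑ i, (M.mulVec x i) ^ 2)}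

/-- Dikin's constant `χ(Z)`: the maximum of `‖Z_I⁻¹‖₂` over all choices `I` of `n`
columns of `Z` forming a nonsingular `n×n` submatrix `Z_I`. -/
noncomputable def chiConst {n : ℕ} {c : Type*} [Fintype c] [DecidableEq c]
    (Z : Matrix (Fin n) c ℝ) : ℝ :=
  sSup {r | ∃ e : Fin n → c, Function.Injective e ∧
    IsUnit (Z.submatrix id e).det ∧ r = specNorm (Z.submatrix id e)⁻¹}

/-- The matrix `Dₙ ∈ ℝ^{n×(n+1)}` whose `i`-th row is `e_{i+1} − e_i`, so that
`Dₙ λ ≤ 0` expresses `λ₁ ≥ … ≥ λ_{n+1}`. -/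
def Dmat (n : ℕ) : Matrix (Fin n) (Fin (n + 1)) ℝ :=
  fun i j => (if j = i.succ then 1 else 0) - (if j = i.castSucc then 1 else 0)

/-- The feasible set of the approximated model `SCO-Eig-ε`: matrices in `S_λ(A,b)` whose
consecutive eigenvalue gaps are at least `ε`. -/
def SEps {m n : ℕ} (A : Matrix (Fin m) (Fin (n + 1)) ℝ) (b : Fin m → ℝ) (ε : ℝ) :
    Set (Matrix (Fin (n + 1)) (Fin (n + 1)) ℝ) :=
  {X | X.IsHermitian ∧ (∀ i, A.mulVec (eigs X) i ≤ b i) ∧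
    ∀ i : Fin n, eigs X i.succ ≤ eigs X i.castSucc - ε}

theorem aux_cara {c E : Type*} [Fintype c] [AddCommGroup E] [Module ℝ E]
    (z : c → E) (w : c → ℝ) (hw : ∀ k, 0 ≤ w k) :
    ∃ μ : c → ℝ, (∀ k, 0 ≤ μ k) ∧ (∀ k, w k = 0 → μ k = 0) ∧
      LinearIndepOn ℝ z {k | μ k ≠ 0} ∧ ∑ k, μ k • z k = ∑ k, w k • z k := by
  classical
  induction h : (Finset.univ.filter (fun k => w k ≠ 0)).card using Nat.strong_induction_on
    generalizing w with
  | _ d ih =>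
  by_cases hli : LinearIndepOn ℝ z {k | w k ≠ 0}
  · exact ⟨w, hw, fun _ h => h, hli, rfl⟩
  have key : ∃ g : c → ℝ, (∀ k, w k = 0 → g k = 0) ∧ ∑ k, g k • z k = 0 ∧ ∃ k, 0 < g k := by
    have h1 : ¬ LinearIndependent ℝ (fun k : {k | w k ≠ 0} => z k) := hli
    rw [Fintype.not_linearIndependent_iff] at h1
    obtain ⟨g, hg, i, hi⟩ := h1
    let g' : c → ℝ := fun k => if hk : w k ≠ 0 then g ⟨k, hk⟩ else 0
    have hg' : ∀ k, w k = 0 → g' k = 0 := fun k hk => by simp [g', hk]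
    have hgi : g' i ≠ 0 := by
      have : w i ≠ 0 := i.2
      simpa [g', this] using hi
    have hsum : ∑ k, g' k • z k = 0 := by
      have := Finset.sum_subtype (F := inferInstance) (Finset.univ.filter (fun k => w k ≠ 0))
          (p := fun k => k ∈ {k | w k ≠ 0}) (by simp) (fun k => g' k • z k)
      have h2 : ∀ k : {k | w k ≠ 0}, g' k = g k := fun k => by
        have : w k ≠ 0 := k.2
        simp [g', this]
      simp only [h2] at this
      refine Eq.trans ?_ (this.trans hg)
      rw [Finset.sum_filter]
      refine Finset.sum_congr rfl fun k _ => ?_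
      by_cases hk : w k = 0 <;> simp [hk, g']
    rcases lt_or_gt_of_ne hgi with h | h
    · exact ⟨fun k => - g' k, fun k hk => by simp [hg' k hk], by simp [hsum], i, by simpa using h⟩
    · exact ⟨g', hg', hsum, i, h⟩
  obtain ⟨g, hg0, hgs, k0, hk0⟩ := key
  obtain ⟨i, hi, hmin⟩ := Finset.exists_min_image (Finset.univ.filter (fun k => 0 < g k))
    (fun k => w k / g k) ⟨k0, by simp [hk0]⟩
  simp only [Finset.mem_filter, Finset.mem_univ, true_and] at hi hmin
  have hwi : w i ≠ 0 := fun h => by have := hg0 i h; linarith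
  have hnn : ∀ k, 0 ≤ w k - w i / g i * g k := by
    intro k
    rcases lt_or_ge 0 (g k) with hk | hk
    · have := hmin k hk
      rw [le_div_iff₀ hk] at this
      linarith
    · have h1 : 0 ≤ w i / g i := div_nonneg (hw i) hi.le
      have := hw k
      nlinarith [mul_nonneg h1 (neg_nonneg.2 hk)]
  obtain ⟨μ, h1, h2, h3, h4⟩ := ih _ (by
    rw [← h]
    apply Finset.card_lt_card
    rw [Finset.ssubset_iff_of_subset]
    · exact ⟨i, by simp [hwi], by simp [hi.ne']⟩
    · intro k
      simp only [Finset.mem_filter, Finset.mem_univ, true_and]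
      intro hk hk0
      exact hk (by rw [hk0, hg0 k hk0]; simp)) (fun k => w k - w i / g i * g k) hnn rfl
  refine ⟨μ, h1, fun k hk => h2 k (by rw [hk, hg0 k hk]; simp), h3, h4.trans ?_⟩
  simp only [sub_smul, mul_smul, Finset.sum_sub_distrib, ← Finset.smul_sum, hgs]
  simp

theorem aux_closed {c E : Type*} [Fintype c] [NormedAddCommGroup E] [InnerProductSpace ℝ E]
    [FiniteDimensional ℝ E] (z : c → E) :
    IsClosed {v : E | ∃ w : c → ℝ, (∀ k, 0 ≤ w k) ∧ ∑ k, w k • z k = v} := by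
  classical
  have : {v : E | ∃ w : c → ℝ, (∀ k, 0 ≤ w k) ∧ ∑ k, w k • z k = v} =
      ⋃ J ∈ {J : Set c | LinearIndepOn ℝ z J},
        (Fintype.linearCombination ℝ (fun k : J => z k)) '' {w | ∀ k, 0 ≤ w k} := by
    ext v
    simp only [Set.mem_ofPred_eq, Set.mem_iUnion, Set.mem_image, exists_prop,
      Fintype.linearCombination_apply]
    constructor
    · rintro ⟨w, hw, rfl⟩
      obtain ⟨μ, h1, h2, h3, h4⟩ := aux_cara z w hw
      refine ⟨_, h3, fun k => μ k, fun k => h1 k, ?_⟩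
      rw [← h4]
      refine Eq.trans (Finset.sum_subtype (Finset.univ.filter (fun k => μ k ≠ 0))
        (p := fun k => k ∈ {k | μ k ≠ 0}) (by simp) (fun k => μ k • z k)).symm ?_
      rw [Finset.sum_filter]
      refine Finset.sum_congr rfl fun k _ => ?_
      by_cases hk : μ k = 0 <;> simp [hk]
    · rintro ⟨J, hJ, w, hw, rfl⟩
      refine ⟨fun k => if hk : k ∈ J then w ⟨k, hk⟩ else 0, ?_, ?_⟩
      · intro k
        dsimp only
        split_ifs
        · exact hw _
        · exact le_rfl
      · have := Finset.sum_subtype (F := inferInstance) (Finset.univ.filter (fun k => k ∈ J))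
          (p := fun k => k ∈ J) (by simp)
          (fun k => (if hk : k ∈ J then w ⟨k, hk⟩ else 0) • z k)
        simp only [Subtype.coe_prop, dif_pos] at this
        refine Eq.trans ?_ this
        rw [Finset.sum_filter]
        refine Finset.sum_congr rfl fun k _ => ?_
        by_cases hk : k ∈ J <;> simp [hk]
  rw [this]
  refine Set.Finite.isClosed_biUnion (Set.toFinite _) ?_
  intro J hJ
  have hinj : LinearMap.ker (Fintype.linearCombination ℝ (fun k : J => z k)) = ⊥ := by
    rw [LinearMap.ker_eq_bot]
    exact linearIndependent_iff_injective_fintypeLinearCombination.1 hJ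
  refine (LinearMap.isClosedEmbedding_of_injective hinj).isClosedMap _ ?_
  simp only [Set.ofPred_forall]
  exact isClosed_iInter fun k => isClosed_le continuous_const (continuous_apply k)

theorem aux_farkas {c E : Type*} [Fintype c] [NormedAddCommGroup E] [InnerProductSpace ℝ E]
    [FiniteDimensional ℝ E] (z : c → E) (v : E)
    (h : ∀ d : E, (∀ k, inner ℝ (z k) d ≤ 0) → inner ℝ v d ≤ 0) :
    ∃ w : c → ℝ, (∀ k, 0 ≤ w k) ∧ ∑ k, w k • z k = v := by
  classical
  by_contra hv
  let C : ProperCone ℝ E :=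
    { carrier := {v : E | ∃ w : c → ℝ, (∀ k, 0 ≤ w k) ∧ ∑ k, w k • z k = v}
      add_mem' := by
        rintro _ _ ⟨w, hw, rfl⟩ ⟨w', hw', rfl⟩
        exact ⟨w + w', fun k => add_nonneg (hw k) (hw' k), by
          simp [add_smul, Finset.sum_add_distrib]⟩
      zero_mem' := ⟨0, by simp, by simp⟩
      smul_mem' := by
        rintro ⟨a, ha⟩ _ ⟨w, hw, rfl⟩
        refine ⟨a • w, fun k => mul_nonneg ha (hw k), ?_⟩
        simp only [Pi.smul_apply, smul_assoc, ← Finset.smul_sum]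
        rfl
      isClosed' := aux_closed z }
  have hvC : v ∉ C := hv
  obtain ⟨y, hy, hy'⟩ := C.hyperplane_separation' hvC
  have := h (-y) (fun k => by
    have : z k ∈ C := ⟨Pi.single k 1, fun j => by
      by_cases hj : j = k
      · subst hj; simp
      · simp [hj], by simp [Pi.single_apply, ite_smul]⟩
    have := hy _ this
    rw [inner_neg_right]; linarith)
  rw [inner_neg_right] at this
  linarith

theorem aux_proj {c E : Type*} [Fintype c] [NormedAddCommGroup E] [InnerProductSpace ℝ E]
    [FiniteDimensional ℝ E] (z : c → E) (q : c → ℝ) (x : E)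
    (hne : ∃ y, ∀ k, inner ℝ (z k) y ≤ q k) :
    ∃ y, (∀ k, inner ℝ (z k) y ≤ q k) ∧ ∃ μ : c → ℝ, (∀ k, 0 ≤ μ k) ∧
      LinearIndepOn ℝ z {k | μ k ≠ 0} ∧ ∑ k, μ k • z k = x - y ∧
      ∀ k, μ k ≠ 0 → inner ℝ (z k) y = q k := by
  classical
  let P : Set E := {y | ∀ k, inner ℝ (z k) y ≤ q k}
  have hcl : IsClosed P := by
    simp only [P, Set.ofPred_forall]
    exact isClosed_iInter fun k => isClosed_le (by fun_prop) continuous_const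
  have hcv : Convex ℝ P := by
    intro a ha b hb s t hs ht hst k
    rw [inner_add_right, inner_smul_right, inner_smul_right]
    have h1 := mul_le_mul_of_nonneg_left (ha k) hs
    have h2 := mul_le_mul_of_nonneg_left (hb k) ht
    have : q k = s * q k + t * q k := by rw [← add_mul, hst, one_mul]
    linarith
  obtain ⟨y, hy, hyx⟩ := exists_norm_eq_iInf_of_complete_convex (K := P) hne hcl.isComplete hcv x
  rw [norm_eq_iInf_iff_real_inner_le_zero hcv hy] at hyx
  let T := {k : c // inner ℝ (z k) y = q k}
  obtain ⟨w, hw, hws⟩ := aux_farkas (fun k : T => z k) (x - y) (by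
    intro d hd
    have hev : ∀ᶠ t in nhdsWithin (0:ℝ) (Set.Ioi 0), y + t • d ∈ P := by
      have : ∀ k, ∀ᶠ t in nhdsWithin (0:ℝ) (Set.Ioi 0), inner ℝ (z k) (y + t • d) ≤ q k := by
        intro k
        by_cases hk : inner ℝ (z k) y = q k
        · filter_upwards [self_mem_nhdsWithin] with t ht
          rw [inner_add_right, inner_smul_right, hk]
          have := hd ⟨k, hk⟩
          have := mul_nonneg (le_of_lt (Set.mem_Ioi.1 ht)) (neg_nonneg.2 this)
          dsimp only at this
          linarith
        · have hlt := lt_of_le_of_ne (hy k) hk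
          apply Filter.Eventually.filter_mono nhdsWithin_le_nhds
          have hc : Continuous (fun t : ℝ => inner ℝ (z k) (y + t • d)) := by fun_prop
          have := hc.continuousAt (x := 0) |>.eventually_lt (continuousAt_const (y := q k))
            (by simpa using hlt)
          exact this.mono fun t ht => ht.le
      exact Filter.eventually_all.2 this
    obtain ⟨t, ht, htpos⟩ := (hev.and self_mem_nhdsWithin).exists
    have := hyx _ ht
    rw [add_sub_cancel_left, inner_smul_right] at this
    by_contra hcon
    push Not at hcon
    have := mul_pos (Set.mem_Ioi.1 htpos) hcon
    linarith)
  let w' : c → ℝ := fun k => if hk : inner ℝ (z k) y = q k then w ⟨k, hk⟩ else 0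
  have hw' : ∑ k, w' k • z k = x - y := by
    rw [← hws]
    have := Finset.sum_subtype (F := inferInstance) (Finset.univ.filter (fun k => inner ℝ (z k) y = q k))
          (p := fun k => inner ℝ (z k) y = q k) (by simp) (fun k => w' k • z k)
    have h2 : ∀ k : T, w' k = w k := fun k => by simp [w', k.2]
    refine Eq.trans ?_ (this.trans ?_)
    · rw [Finset.sum_filter]
      refine Finset.sum_congr rfl fun k _ => ?_
      by_cases hk : inner ℝ (z k) y = q k <;> simp [hk, w']
    · exact Finset.sum_congr rfl fun k _ => by rw [h2]
  obtain ⟨μ, h1, h2, h3, h4⟩ := aux_cara z w' (fun k => by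
    dsimp only [w']; split_ifs
    · exact hw _
    · exact le_rfl)
  refine ⟨y, hy, μ, h1, h3, h4.trans hw', fun k hk => ?_⟩
  by_contra hcon
  exact hk (h2 k (by simp [w', hcon]))

theorem aux_anti_eq {n : ℕ} (f g : Fin n → ℝ) (hf : Antitone f) (hg : Antitone g)
    (h : Multiset.map f Finset.univ.val = Multiset.map g Finset.univ.val) : f = g := by
  rw [Fin.univ_val_map, Fin.univ_val_map, Multiset.coe_eq_coe] at h
  exact List.ofFn_injective (h.eq_of_pairwise' hf.sortedGE_ofFn.pairwise hg.sortedGE_ofFn.pairwise)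

theorem aux_eigs_spec {n : ℕ} (X : Matrix (Fin n) (Fin n) ℝ) (hX : X.IsHermitian) :
    ∃ σ : Equiv.Perm (Fin n), eigs X = hX.eigenvalues ∘ σ := by
  refine ⟨Fin.revPerm.trans (Tuple.sort hX.eigenvalues), ?_⟩
  rw [eigs, dif_pos hX]
  rfl

theorem aux_eigs_anti {n : ℕ} (X : Matrix (Fin n) (Fin n) ℝ) : Antitone (eigs X) := by
  rw [eigs]
  split_ifs with hX
  · intro i j hij
    exact Tuple.monotone_sort hX.eigenvalues (Fin.rev_le_rev.2 hij)
  · exact antitone_const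

theorem aux_map_perm {n : ℕ} (f : Fin n → ℝ) (σ : Equiv.Perm (Fin n)) :
    Multiset.map (f ∘ σ) Finset.univ.val = Multiset.map f Finset.univ.val := by
  rw [← Multiset.map_map]
  congr 1
  simp

theorem aux_eigs_roots {n : ℕ} (X : Matrix (Fin n) (Fin n) ℝ) (hX : X.IsHermitian) :
    Multiset.map (eigs X) Finset.univ.val = X.charpoly.roots := by
  obtain ⟨σ, hσ⟩ := aux_eigs_spec X hX
  rw [hσ, aux_map_perm, hX.roots_charpoly_eq_eigenvalues]
  rfl

theorem aux_frob {n : ℕ} (M : Matrix (Fin n) (Fin n) ℝ) :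
    ∑ i, ∑ j, (M i j) ^ 2 = (Mᵀ * M).trace := by
  simp only [Matrix.trace, Matrix.diag, Matrix.mul_apply, Matrix.transpose_apply, sq]
  rw [Finset.sum_comm]

theorem aux_phi {n : ℕ} (X : Matrix (Fin n) (Fin n) ℝ) (hX : X.IsHermitian) :
    ∃ Φ : (Fin n → ℝ) → Matrix (Fin n) (Fin n) ℝ, Φ (eigs X) = X ∧ (∀ v, (Φ v).IsHermitian) ∧
      (∀ v, Antitone v → eigs (Φ v) = v) ∧
      (∀ v w, frobNorm (Φ v - Φ w) = Real.sqrt (∑ i, (v i - w i) ^ 2)) ∧ Continuous Φ := by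
  obtain ⟨σ, hσ⟩ := aux_eigs_spec X hX
  let U : Matrix (Fin n) (Fin n) ℝ := hX.eigenvectorUnitary
  have hU : Uᵀ * U = 1 := by
    have := Unitary.coe_star_mul_self hX.eigenvectorUnitary
    rwa [star_eq_conjTranspose, conjTranspose_eq_transpose_of_trivial] at this
  let Φ : (Fin n → ℝ) → Matrix (Fin n) (Fin n) ℝ := fun v => U * diagonal (v ∘ σ.symm) * Uᵀ
  have hherm : ∀ v, (Φ v).IsHermitian := by
    intro v
    simp only [IsHermitian, conjTranspose_eq_transpose_of_trivial, Φ, transpose_mul,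
      transpose_transpose, diagonal_transpose, Matrix.mul_assoc]
  refine ⟨Φ, ?_, hherm, ?_, ?_, ?_⟩
  · have := hX.spectral_theorem
    rw [Unitary.conjStarAlgAut_apply, star_eq_conjTranspose,
      conjTranspose_eq_transpose_of_trivial] at this
    conv_rhs => rw [this]
    simp only [Φ, hσ, Function.comp_assoc, Equiv.self_comp_symm]
    rfl
  · intro v hv
    refine aux_anti_eq _ _ (aux_eigs_anti _) hv ?_
    rw [aux_eigs_roots _ (hherm v)]
    have : (Φ v).charpoly = (diagonal (v ∘ σ.symm)).charpoly := by
      simp only [Φ]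
      rw [charpoly_mul_comm, ← Matrix.mul_assoc, hU, Matrix.one_mul]
    rw [this, charpoly_diagonal, Polynomial.roots_prod]
    · simp only [Polynomial.roots_X_sub_C, Multiset.bind_singleton]
      exact aux_map_perm v σ.symm
    · simp [Finset.prod_ne_zero_iff, Polynomial.X_sub_C_ne_zero]
  · intro v w
    rw [frobNorm, aux_frob]
    congr 1
    have h1 : Φ v - Φ w = U * diagonal ((v - w) ∘ σ.symm) * Uᵀ := by
      simp only [Φ, ← Matrix.mul_sub, ← Matrix.sub_mul, diagonal_sub]
      rfl
    rw [h1, transpose_mul, transpose_mul, transpose_transpose, diagonal_transpose,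
      Matrix.mul_assoc, Matrix.trace_mul_comm]
    simp only [Matrix.mul_assoc]
    rw [hU, Matrix.mul_one, ← Matrix.mul_assoc Uᵀ U, hU, Matrix.one_mul, diagonal_mul_diagonal,
      trace_diagonal]
    rw [← Equiv.sum_comp σ]
    simp [sq]
  · simp only [Φ]
    fun_prop

theorem aux_spec {k l : Type*} [Fintype k] [Fintype l] (M : Matrix k l ℝ) (x : l → ℝ) :
    Real.sqrt (∑ i, (M.mulVec x i) ^ 2) ≤ specNorm M * Real.sqrt (∑ j, (x j) ^ 2) := by
  have hb : ∀ x : l → ℝ, ∑ i, (M.mulVec x i) ^ 2 ≤ (∑ i, ∑ j, M i j ^ 2) * ∑ j, (x j) ^ 2 := by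
    intro x
    rw [Finset.sum_mul]
    exact Finset.sum_le_sum fun i _ => Finset.sum_mul_sq_le_sq_mul_sq _ _ _
  have hbdd : BddAbove {r | ∃ x : l → ℝ, Real.sqrt (∑ j, (x j) ^ 2) ≤ 1 ∧
    r = Real.sqrt (∑ i, (M.mulVec x i) ^ 2)} := by
    refine ⟨Real.sqrt (∑ i, ∑ j, M i j ^ 2), ?_⟩
    rintro _ ⟨x, hx, rfl⟩
    apply Real.sqrt_le_sqrt
    refine (hb x).trans ?_
    have : ∑ j, x j ^ 2 ≤ 1 := by rwa [Real.sqrt_le_one] at hx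
    exact mul_le_of_le_one_right (by positivity) this
  set r := Real.sqrt (∑ j, (x j) ^ 2) with hr
  have hsq : r ^ 2 = ∑ j, (x j) ^ 2 := Real.sq_sqrt (by positivity)
  rcases (show 0 ≤ r from Real.sqrt_nonneg _).eq_or_lt with h0 | hpos
  · rw [← h0, mul_zero]
    have h1 := hb x
    rw [← hsq, ← h0] at h1
    rw [Real.sqrt_eq_zero_of_nonpos (by simpa using h1)]
  · rw [← div_le_iff₀ hpos]
    refine le_csSup hbdd ⟨r⁻¹ • x, ?_, ?_⟩
    · simp only [Pi.smul_apply, smul_eq_mul, mul_pow, ← Finset.mul_sum, ← hsq]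
      rw [← mul_pow, inv_mul_cancel₀ hpos.ne']; simp
    · simp only [mulVec_smul, Pi.smul_apply, smul_eq_mul, mul_pow, ← Finset.mul_sum]
      rw [Real.sqrt_mul (by positivity), Real.sqrt_sq (by positivity)]
      field_simp

theorem aux_chi {n : ℕ} {c : Type*} [Fintype c] [DecidableEq c] (Z : Matrix (Fin n) c ℝ)
    (e : Fin n → c) (he : Function.Injective e) (hu : IsUnit (Z.submatrix id e).det) :
    specNorm (Z.submatrix id e)⁻¹ ≤ chiConst Z := by
  refine le_csSup ?_ ⟨e, he, hu, rfl⟩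
  refine Set.Finite.bddAbove ((Set.finite_range
    (fun e : Fin n → c => specNorm (Z.submatrix id e)⁻¹)).subset ?_)
  rintro _ ⟨e, _, _, rfl⟩
  exact ⟨e, rfl⟩

theorem aux_basis {n : ℕ} {c : Type*} [Fintype c] [DecidableEq c] (Z : Matrix (Fin n) c ℝ)
    (hr : Z.rank = n) (J : Set c) (hJ : LinearIndepOn ℝ Z.col J) :
    ∃ e : Fin n → c, Function.Injective e ∧ IsUnit (Z.submatrix id e).det ∧
      J ⊆ Set.range e := by
  classical
  obtain ⟨B, -, hJB, hsp, hB⟩ := exists_linearIndepOn_extension hJ (Set.subset_univ J)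
  have hcard : Fintype.card B = n := by
    have h1 : Submodule.span ℝ (Z.col '' B) = Submodule.span ℝ (Set.range Z.col) := by
      apply le_antisymm
      · exact Submodule.span_mono (Set.image_subset_range _ _)
      · rw [Submodule.span_le, ← Set.image_univ]; exact hsp
    have h2 := finrank_span_eq_card hB
    rw [Set.image_eq_range] at h1
    rw [Matrix.rank_eq_finrank_span_cols, ← h1] at hr
    exact h2.symm.trans hr
  let f : Fin n ≃ B := (Fintype.equivFinOfCardEq hcard).symm
  refine ⟨fun i => f i, fun i j h => f.injective (Subtype.ext h), ?_, ?_⟩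
  · rw [← Matrix.isUnit_iff_isUnit_det, ← Matrix.linearIndependent_cols_iff_isUnit]
    exact (linearIndependent_equiv f).2 hB
  · intro k hk
    exact ⟨f.symm ⟨k, hJB hk⟩, by simp⟩

theorem aux_mu {n : ℕ} {c : Type*} [Fintype c] [DecidableEq c] (Z : Matrix (Fin n) c ℝ)
    (hr : Z.rank = n) (μ : c → ℝ) (hJ : LinearIndepOn ℝ Z.col {k | μ k ≠ 0}) :
    Real.sqrt (∑ k, μ k ^ 2) ≤ chiConst Z * Real.sqrt (∑ i, (Z.mulVec μ i) ^ 2) := by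
  obtain ⟨e, he, hu, hJe⟩ := aux_basis Z hr _ hJ
  have hz : ∀ k, k ∉ Set.range e → μ k = 0 := fun k hk => by
    by_contra h
    exact hk (hJe h)
  have h1 : (Z.submatrix id e).mulVec (μ ∘ e) = Z.mulVec μ := by
    ext i
    simp only [mulVec, dotProduct, submatrix_apply, id, Function.comp]
    exact Fintype.sum_of_injective e he _ (fun k => Z i k * μ k)
      (fun k hk => by simp [hz k hk]) (fun _ => rfl)
  have h2 : (Z.submatrix id e)⁻¹.mulVec (Z.mulVec μ) = μ ∘ e := by
    rw [← h1, mulVec_mulVec, nonsing_inv_mul _ hu, one_mulVec]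
  have h3 : ∑ k, μ k ^ 2 = ∑ i, (μ ∘ e) i ^ 2 :=
    (Fintype.sum_of_injective e he _ (fun k => μ k ^ 2)
      (fun k hk => by simp [hz k hk]) (fun _ => rfl)).symm
  have h4 := aux_spec (Z.submatrix id e)⁻¹ (Z.mulVec μ)
  rw [h2, ← h3] at h4
  exact h4.trans (mul_le_mul_of_nonneg_right (aux_chi Z e he hu) (Real.sqrt_nonneg _))

theorem aux_chi_nonneg {n : ℕ} {c : Type*} [Fintype c] [DecidableEq c]
    (Z : Matrix (Fin n) c ℝ) : 0 ≤ chiConst Z := by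
  refine Real.sSup_nonneg ?_
  rintro _ ⟨e, _, _, rfl⟩
  refine Real.sSup_nonneg ?_
  rintro _ ⟨x, _, rfl⟩
  exact Real.sqrt_nonneg _

theorem aux_hoff {N m n : ℕ} (Z : Matrix (Fin N) (Fin m ⊕ Fin n) ℝ) (hr : Z.rank = N)
    (b : Fin m → ℝ) (ε : ℝ) (hε : 0 ≤ ε) (x : Fin N → ℝ)
    (hx1 : ∀ i, (Zᵀ *ᵥ x) (Sum.inl i) ≤ b i) (hx2 : ∀ i, (Zᵀ *ᵥ x) (Sum.inr i) ≤ 0)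
    (hne : ∃ y, (∀ i, (Zᵀ *ᵥ y) (Sum.inl i) ≤ b i) ∧ ∀ i, (Zᵀ *ᵥ y) (Sum.inr i) ≤ -ε) :
    ∃ y, ((∀ i, (Zᵀ *ᵥ y) (Sum.inl i) ≤ b i) ∧ ∀ i, (Zᵀ *ᵥ y) (Sum.inr i) ≤ -ε) ∧
      Real.sqrt (∑ i, (x i - y i) ^ 2) ≤ chiConst Z * Real.sqrt n * ε := by
  let z : Fin m ⊕ Fin n → EuclideanSpace ℝ (Fin N) := fun k => WithLp.toLp 2 (Z.col k)
  have hin : ∀ k (y : EuclideanSpace ℝ (Fin N)), inner ℝ (z k) y = (Zᵀ *ᵥ y.ofLp) k := by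
    intro k y
    simp only [z, PiLp.inner_apply, mulVec, dotProduct]
    refine Finset.sum_congr rfl fun i _ => ?_
    simp [mul_comm]
  obtain ⟨y0, hy01, hy02⟩ := hne
  obtain ⟨y, hy, μ, hμ, hli, hsum, hact⟩ := aux_proj z (Sum.elim b (fun _ => -ε)) (WithLp.toLp 2 x)
    ⟨WithLp.toLp 2 y0, by
      rintro (i | i)
      · rw [hin]; exact hy01 i
      · rw [hin]; exact hy02 i⟩
  refine ⟨y.ofLp, ⟨fun i => ?_, fun i => ?_⟩, ?_⟩
  · have := hy (Sum.inl i); rwa [hin] at this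
  · have := hy (Sum.inr i); rwa [hin] at this
  have hZ : ∀ i, (Z *ᵥ μ) i = x i - y.ofLp i := by
    intro i
    have := congrArg (fun v : EuclideanSpace ℝ (Fin N) => v i) hsum
    simp only [z, PiLp.sub_apply, WithLp.ofLp_sum, Finset.sum_apply, PiLp.smul_apply,
      smul_eq_mul] at this
    rw [← this]
    simp [mulVec, dotProduct, mul_comm]
  have hli' : LinearIndepOn ℝ Z.col {k | μ k ≠ 0} :=
    LinearIndependent.map' hli (WithLp.linearEquiv 2 ℝ (Fin N → ℝ)).toLinearMap
      (LinearEquiv.ker _)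
  have hbound := aux_mu Z hr μ hli'
  simp only [hZ] at hbound
  set R := Real.sqrt (∑ i, (x i - y.ofLp i) ^ 2) with hR
  have hR0 : 0 ≤ R := Real.sqrt_nonneg _
  have hR2 : R ^ 2 = ∑ k, μ k * (Zᵀ *ᵥ (x - y.ofLp)) k := by
    rw [hR, Real.sq_sqrt (by positivity)]
    have : ∑ k, μ k * (Zᵀ *ᵥ (x - y.ofLp)) k = (Z *ᵥ μ) ⬝ᵥ (x - y.ofLp) := by
      rw [← Matrix.vecMul_transpose Z μ, ← Matrix.dotProduct_mulVec]
      rfl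
    rw [this]
    simp only [dotProduct, hZ, Pi.sub_apply, sq]
  have hterm : ∀ k, μ k * (Zᵀ *ᵥ (x - y.ofLp)) k ≤ μ k * Sum.elim (fun _ => 0) (fun _ => ε) k := by
    intro k
    by_cases hk : μ k = 0
    · simp [hk]
    refine mul_le_mul_of_nonneg_left ?_ (hμ k)
    have h1 := hact k hk
    rw [hin] at h1
    rw [mulVec_sub, Pi.sub_apply, h1]
    rcases k with i | i
    · have := hx1 i
      simp only [Sum.elim_inl]; linarith
    · have := hx2 i
      simp only [Sum.elim_inr]; linarith
  have h2 : R ^ 2 ≤ (∑ i, μ (Sum.inr i)) * ε := by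
    rw [hR2]
    refine (Finset.sum_le_sum fun k _ => hterm k).trans (le_of_eq ?_)
    simp [Fintype.sum_sum_type, Finset.sum_mul]
  have h3 : ∑ i, μ (Sum.inr i) ≤ Real.sqrt n * Real.sqrt (∑ k, μ k ^ 2) := by
    rw [← Real.sqrt_mul (by positivity)]
    apply Real.le_sqrt_of_sq_le
    have h := sq_sum_le_card_mul_sum_sq (s := Finset.univ) (f := fun i : Fin n => μ (Sum.inr i))
    simp only [Finset.card_univ, Fintype.card_fin] at h
    refine h.trans (mul_le_mul_of_nonneg_left ?_ (by positivity))
    rw [Fintype.sum_sum_type]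
    exact le_add_of_nonneg_left (by positivity)
  have h4 : R * R ≤ (chiConst Z * Real.sqrt n * ε) * R := by
    have h5 := mul_le_mul_of_nonneg_right
      (h3.trans (mul_le_mul_of_nonneg_left hbound (Real.sqrt_nonneg n))) hε
    nlinarith
  rcases hR0.eq_or_lt with h | h
  · rw [← h]
    have := aux_chi_nonneg Z
    positivity
  · exact le_of_mul_le_mul_right h4 h

theorem aux_ZT {m n : ℕ} (A : Matrix (Fin m) (Fin (n + 1)) ℝ) (v : Fin (n + 1) → ℝ) :
    (∀ i, ((fromCols Aᵀ (Dmat n)ᵀ)ᵀ *ᵥ v) (Sum.inl i) = (A *ᵥ v) i) ∧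
    (∀ i : Fin n, ((fromCols Aᵀ (Dmat n)ᵀ)ᵀ *ᵥ v) (Sum.inr i) = v i.succ - v i.castSucc) := by
  rw [transpose_fromCols, transpose_transpose, transpose_transpose, fromRows_mulVec]
  refine ⟨fun i => rfl, fun i => ?_⟩
  simp [Dmat, mulVec, dotProduct, sub_mul, Finset.sum_sub_distrib]

theorem aux_strict {m n : ℕ} (A : Matrix (Fin m) (Fin (n + 1)) ℝ) (b : Fin m → ℝ)
    (hint : (interior {Y : {X : Matrix (Fin (n + 1)) (Fin (n + 1)) ℝ // X.IsHermitian} |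
      (Y : Matrix (Fin (n + 1)) (Fin (n + 1)) ℝ) ∈ SLambda A b}).Nonempty) :
    ∃ ε₀ > (0 : ℝ), ∃ v : Fin (n + 1) → ℝ, (∀ i, (A *ᵥ v) i ≤ b i) ∧
      ∀ i : Fin n, v i.succ ≤ v i.castSucc - ε₀ := by
  obtain ⟨⟨Y, hY⟩, hYint⟩ := hint
  obtain ⟨Φ, h1, h2, h3, -, h5⟩ := aux_phi Y hY
  let γ : ℝ → {X : Matrix (Fin (n + 1)) (Fin (n + 1)) ℝ // X.IsHermitian} :=
    fun t => ⟨Φ (fun i => eigs Y i - t * (i : ℕ)), h2 _⟩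
  have hγ : Continuous γ := by
    refine Continuous.subtype_mk (h5.comp ?_) _
    fun_prop
  have hγ0 : γ 0 = ⟨Y, hY⟩ := by
    simp only [γ, zero_mul, sub_zero]
    exact Subtype.ext h1
  have hev : ∀ᶠ t in nhds (0:ℝ), γ t ∈ _ :=
    hγ.continuousAt.eventually_mem (hγ0 ▸ mem_interior_iff_mem_nhds.1 hYint)
  have hev' := hev.filter_mono (nhdsWithin_le_nhds (s := Set.Ioi 0))
  obtain ⟨t, ht, htpos⟩ := (hev'.and self_mem_nhdsWithin).exists
  have htpos : 0 < t := htpos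
  have hY' := aux_eigs_anti Y
  have hanti : Antitone (fun i : Fin (n + 1) => eigs Y i - t * (i : ℕ)) := by
    intro i j hij
    have h1 := hY' hij
    have h2 : ((i : ℕ) : ℝ) ≤ (j : ℕ) := by exact_mod_cast hij
    have := mul_le_mul_of_nonneg_left h2 htpos.le
    dsimp only
    linarith
  refine ⟨t, htpos, fun i => eigs Y i - t * (i : ℕ), fun i => ?_, fun i => ?_⟩
  · have := ht.2 i
    simpa only [γ, h3 _ hanti] using this
  · have := hY' (Fin.castSucc_lt_succ (i := i)).le
    simp only [Fin.val_succ, Fin.val_castSucc]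
    push_cast
    linarith

/-- Accuracy of the approximated model: if `F` is `L`-Lipschitz (Frobenius norm),
`S_λ(A,b)` has nonempty interior (in the space of symmetric matrices), and
`[Aᵀ | Dₙᵀ]` has full rank, then there is `ε₀ > 0` such that for all `ε ∈ [0,ε₀]`
the feasible set of `SCO-Eig-ε` is nonempty, and any of its global minimizers `X*_ε`
satisfies `|F(X*) − F(X*_ε)| ≤ L · χ([Aᵀ|Dₙᵀ]) · √(n−1) · ε`, where `X*` is a global
minimizer of the original problem. (Here the matrices are `(n+1)×(n+1)`, so the paper's
`n−1` is `n`.) -/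
theorem statement5 {m n : ℕ} (A : Matrix (Fin m) (Fin (n + 1)) ℝ) (b : Fin m → ℝ)
    (F : Matrix (Fin (n + 1)) (Fin (n + 1)) ℝ → ℝ) (L : ℝ) (hL : 0 < L)
    (hLip : ∀ X Y : Matrix (Fin (n + 1)) (Fin (n + 1)) ℝ,
      X.IsHermitian → Y.IsHermitian → |F X - F Y| ≤ L * frobNorm (X - Y))
    (hint : (interior {Y : {X : Matrix (Fin (n + 1)) (Fin (n + 1)) ℝ // X.IsHermitian} |
      (Y : Matrix (Fin (n + 1)) (Fin (n + 1)) ℝ) ∈ SLambda A b}).Nonempty)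
    (hrank : (fromCols Aᵀ (Dmat n)ᵀ).rank = n + 1)
    (Xstar : Matrix (Fin (n + 1)) (Fin (n + 1)) ℝ)
    (hXstar : Xstar ∈ SLambda A b)
    (hmin : ∀ X ∈ SLambda A b, F Xstar ≤ F X) :
    ∃ ε₀ > (0 : ℝ), ∀ ε ∈ Set.Icc (0 : ℝ) ε₀,
      (SEps A b ε).Nonempty ∧
      ∀ Xe ∈ SEps A b ε, (∀ X ∈ SEps A b ε, F Xe ≤ F X) →
        |F Xstar - F Xe| ≤ L * chiConst (fromCols Aᵀ (Dmat n)ᵀ) * Real.sqrt n * ε := by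
  obtain ⟨ε₀, hε₀, v0, hv1, hv2⟩ := aux_strict A b hint
  refine ⟨ε₀, hε₀, fun ε hε => ?_⟩
  obtain ⟨hε1, hε2⟩ := hε
  obtain ⟨Φ, p1, p2, p3, p4, -⟩ := aux_phi Xstar hXstar.1
  have hmem : ∀ v : Fin (n + 1) → ℝ, (∀ i, (A *ᵥ v) i ≤ b i) →
      (∀ i : Fin n, v i.succ ≤ v i.castSucc - ε) → Φ v ∈ SEps A b ε := by
    intro v h1 h2
    have : Antitone v := Fin.antitone_iff_succ_le.2 fun i => (h2 i).trans (by linarith)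
    refine ⟨p2 v, ?_, ?_⟩
    · rw [p3 v this]; exact h1
    · rw [p3 v this]; exact h2
  have hv2' : ∀ i : Fin n, v0 i.succ ≤ v0 i.castSucc - ε := fun i => (hv2 i).trans (by linarith)
  refine ⟨⟨_, hmem v0 hv1 hv2'⟩, fun Xe hXe hXemin => ?_⟩
  obtain ⟨y, ⟨hy1, hy2⟩, hyd⟩ := aux_hoff (fromCols Aᵀ (Dmat n)ᵀ) hrank b ε hε1 (eigs Xstar)
    (fun i => by rw [(aux_ZT A _).1]; exact hXstar.2 i)
    (fun i => by
      rw [(aux_ZT A _).2]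
      have := aux_eigs_anti Xstar (Fin.castSucc_lt_succ (i := i)).le
      linarith)
    ⟨v0, fun i => by rw [(aux_ZT A _).1]; exact hv1 i, fun i => by
      rw [(aux_ZT A _).2]
      have := hv2' i
      linarith⟩
  have hΦy := hmem y (fun i => by have := hy1 i; rwa [(aux_ZT A _).1] at this) (fun i => by
    have := hy2 i
    rw [(aux_ZT A _).2] at this
    linarith)
  have q1 : F Xstar ≤ F Xe := hmin Xe ⟨hXe.1, hXe.2.1⟩
  have q2 : F Xe ≤ F (Φ y) := hXemin _ hΦy
  have q3 := hLip Xstar (Φ y) hXstar.1 (p2 y)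
  have q4 := p4 (eigs Xstar) y
  rw [p1] at q4
  rw [q4] at q3
  have q5 := mul_le_mul_of_nonneg_left hyd hL.le
  rw [abs_le] at q3
  rw [abs_sub_comm, abs_of_nonneg (by linarith)]
  have q6 : L * (chiConst (fromCols Aᵀ (Dmat n)ᵀ) * Real.sqrt n * ε) =
    L * chiConst (fromCols Aᵀ (Dmat n)ᵀ) * Real.sqrt n * ε := by ring
  linarith
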